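/- arXiv:1701.01033 — 2 statements merged into one kernel-verified Lean document; each statement's English description precedes it below -/
import Mathlib

section
/- Let m_1, m_2 ∈ ℝ³ be linearly independent unit vectors. Let d_1 be the unit vector in span{m_1,m_2} orthogonal to m_2 with d_1·m_1 > 0, let d_2 be the unit vector in span{m_1,m_2} orthogonal to m_1 with d_2·m_2 > 0, and let n := (m_1×m_2)/|m_1×m_2|. Then there exists a constant c > 0, depending only on m_1 and m_2, such that for every open set V ⊆ ℝ³ and all s_1, s_2 ∈ L¹(V;ℝ³) with s_1(x)·m_1 = 0 and s_2(x)·m_2 = 0 for a.e. x ∈ V, one has ∫_V |∇_{m_1^⊥} s_1| + ∫_V |∇_{m_2^⊥} s_2| ≥ c ( TV_{d_1}(|s_2|; V) + TV_{d_2}(|s_1|; V) + TV_{n}(|s_1|; V) + TV_{n}(|s_2|; V) ), where |s_j| denotes the pointwise Euclidean norm of s_j. -/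
open MeasureTheory Filter Topology Matrix
open scoped ENNReal RealInnerProductSpace

noncomputable section

/-- Points of physical space `ℝ³`, with the Euclidean norm. -/
abbrev V3 : Type := EuclideanSpace ℝ (Fin 3)

/-- Real `3 × 3` matrices. -/
abbrev M3 : Type := Matrix (Fin 3) (Fin 3) ℝ

/-- Frobenius norm of a `3 × 3` matrix. -/
def frob (M : M3) : ℝ := Real.sqrt (∑ i, ∑ j, (M i j) ^ 2)

/-- The dyadic (outer) product `s ⊗ m`, i.e. the matrix `(sᵢ mₖ)`. -/
def outer (s m : V3) : M3 := fun i k => s i * m k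

/-- Cofactor matrix (transpose of the adjugate). -/
def cof (M : M3) : M3 := (Matrix.adjugate M)ᵀ

/-- Symmetric part `(M + Mᵀ)/2`. -/
def symPart (M : M3) : M3 := (1 / 2 : ℝ) • (M + Mᵀ)

/-- Membership in `L^p(Ω; ℝ³)` for a real exponent `p`. -/
def MemLpV (p : ℝ) (Ω : Set V3) (f : V3 → V3) : Prop :=
  AEStronglyMeasurable f (volume.restrict Ω) ∧ IntegrableOn (fun x => ‖f x‖ ^ p) Ω

/-- Membership in `L^p(Ω; ℝ^{3×3})` (Frobenius norm) for a real exponent `p`. -/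
def MemLpM (p : ℝ) (Ω : Set V3) (F : V3 → M3) : Prop :=
  (∀ i k : Fin 3, AEStronglyMeasurable (fun x => F x i k) (volume.restrict Ω)) ∧
    IntegrableOn (fun x => frob (F x) ^ p) Ω

/-- The `L^p`-norm of an `ℝ³`-valued map. -/
def lpNormV (p : ℝ) (Ω : Set V3) (f : V3 → V3) : ℝ := (∫ x in Ω, ‖f x‖ ^ p) ^ (1 / p)

/-- The `L^p`-norm of a matrix-valued map (Frobenius norm). -/
def lpNormM (p : ℝ) (Ω : Set V3) (F : V3 → M3) : ℝ := (∫ x in Ω, frob (F x) ^ p) ^ (1 / p)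

/-- Test functions for weak `L^p` convergence: elements of the conjugate space
`L^{p'}(Ω;ℝ³)`, where `p' = ∞` (bounded functions) if `p = 1` and
`p' = p/(p-1)` if `p > 1`. -/
def ConjTestV (p : ℝ) (Ω : Set V3) (g : V3 → V3) : Prop :=
  AEStronglyMeasurable g (volume.restrict Ω) ∧
    ((p = 1 ∧ ∃ Cb : ℝ, ∀ᵐ x ∂volume.restrict Ω, ‖g x‖ ≤ Cb) ∨
      (1 < p ∧ IntegrableOn (fun x => ‖g x‖ ^ (p / (p - 1))) Ω))

/-- Weak convergence `sₖ ⇀ s` in `L^p(Ω;ℝ³)`. -/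
def WeakLpV (p : ℝ) (Ω : Set V3) (sk : ℕ → V3 → V3) (s : V3 → V3) : Prop :=
  ∀ g : V3 → V3, ConjTestV p Ω g →
    Tendsto (fun k => ∫ x in Ω, ⟪sk k x, g x⟫) atTop (nhds (∫ x in Ω, ⟪s x, g x⟫))

/-- Test functions for weak `L^p` convergence of matrix fields. -/
def ConjTestM (p : ℝ) (Ω : Set V3) (g : V3 → M3) : Prop :=
  (∀ i k : Fin 3, AEStronglyMeasurable (fun x => g x i k) (volume.restrict Ω)) ∧
    ((p = 1 ∧ ∃ Cb : ℝ, ∀ᵐ x ∂volume.restrict Ω, frob (g x) ≤ Cb) ∨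
      (1 < p ∧ IntegrableOn (fun x => frob (g x) ^ (p / (p - 1))) Ω))

/-- Weak convergence `Fₖ ⇀ F` in `L^p(Ω;ℝ^{3×3})`. -/
def WeakLpM (p : ℝ) (Ω : Set V3) (Fk : ℕ → V3 → M3) (F : V3 → M3) : Prop :=
  ∀ g : V3 → M3, ConjTestM p Ω g →
    Tendsto (fun k => ∫ x in Ω, ∑ i, ∑ l, Fk k x i l * g x i l) atTop
      (nhds (∫ x in Ω, ∑ i, ∑ l, F x i l * g x i l))

/-- `φ` is a `C¹` function compactly supported inside the open set `U`. -/
def C1c (U : Set V3) (φ : V3 → V3) : Prop :=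
  ContDiff ℝ 1 φ ∧ HasCompactSupport φ ∧ tsupport φ ⊆ U

/-- The planar total variation `∫_U |∇_{m^⊥} s|`, defined by duality relative to an
orthonormal basis `(e₁, e₂)` of `m^⊥`. -/
def PTV (U : Set V3) (e₁ e₂ : V3) (s : V3 → V3) : ℝ≥0∞ :=
  ⨆ φ : {φ : (V3 → V3) × (V3 → V3) //
      C1c U φ.1 ∧ C1c U φ.2 ∧ ∀ x, ‖φ.1 x‖ ^ 2 + ‖φ.2 x‖ ^ 2 ≤ 1},
    ENNReal.ofReal
      (∫ x in U, (⟪s x, fderiv ℝ (φ : (V3 → V3) × (V3 → V3)).1 x e₁⟫ +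
        ⟪s x, fderiv ℝ (φ : (V3 → V3) × (V3 → V3)).2 x e₂⟫))

/-- `(e₁, e₂)` is an orthonormal basis of the plane `m^⊥`. -/
def ONBperp (m e₁ e₂ : V3) : Prop :=
  ‖e₁‖ = 1 ∧ ‖e₂‖ = 1 ∧ ⟪e₁, e₂⟫ = 0 ∧ ⟪e₁, m⟫ = 0 ∧ ⟪e₂, m⟫ = 0

/-- `G` is the weak (distributional) gradient of `y` on `Ω`. -/
def IsWeakGradient (Ω : Set V3) (y : V3 → V3) (G : V3 → M3) : Prop :=
  ∀ φ : V3 → ℝ, ContDiff ℝ (⊤ : ℕ∞) φ → HasCompactSupport φ → tsupport φ ⊆ Ω →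
    ∀ i k : Fin 3,
      ∫ x in Ω, y x i * fderiv ℝ φ x (EuclideanSpace.single k (1 : ℝ)) =
        - ∫ x in Ω, G x i k * φ x


/-- The directional total variation `TV_d(f; U)`, defined by duality. -/
def dirTV (U : Set V3) (d : V3) (f : V3 → ℝ) : ℝ≥0∞ :=
  ⨆ φ : {φ : V3 → ℝ // ContDiff ℝ 1 φ ∧ HasCompactSupport φ ∧ tsupport φ ⊆ U ∧
      ∀ x, |φ x| ≤ 1},
    ENNReal.ofReal (∫ x in U, f x * fderiv ℝ (φ : V3 → ℝ) x d)

/-!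
For a direction `d`, `∫ |s| ∂_d φ` is the derivative at `t = 0` of
`∫ |s(x)| φ(x + td) dx = ∫ |s(x - td)| φ(x) dx`, so by the reverse triangle inequality it is at
most the limit of `t⁻¹ ∫ |s(x - td) - s(x)| |φ(x)| dx`. By duality, the last integral is a supremum
of `∫ ⟨s(x - td) - s(x), χ(x)⟩ dx` over `C¹` fields with `|χ| ≤ |φ|`, and each of these is `t` times
an average over `0 ≤ r ≤ t` of `∫ ⟨s(x), ∂_d χ(x + rd)⟩ dx`, where `χ(· + rd)` is itself a test
field. Hence the variation of `|s|` along `d` is bounded by the variation of the vector field `s`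
along `d`. For a unit vector `d ⊥ m` the latter is bounded by the planar variation: test with
`(⟨e₁, d⟩ ψ, ⟨e₂, d⟩ ψ)`. Both `d₁, n ⊥ m₂` and `d₂, n ⊥ m₁`, so each planar variation is used
twice and `c = 1/2` works.
-/

open scoped Convolution

section TestFields

variable {E F G : Type*} [NormedAddCommGroup E] [NormedSpace ℝ E] [NormedAddCommGroup F]
  [NormedSpace ℝ F] [NormedAddCommGroup G] [NormedSpace ℝ G]

/-- The competitors in the dual definition of total variation on `U`: `C¹` fields of norm at most
one, compactly supported in `U`. -/
structure IsUnitTestField (U : Set E) (ψ : E → F) : Prop where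
  contDiff : ContDiff ℝ 1 ψ
  hasCompactSupport : HasCompactSupport ψ
  tsupport_subset : tsupport ψ ⊆ U
  norm_le_one : ∀ x, ‖ψ x‖ ≤ 1

namespace IsUnitTestField

lemma mono {U W : Set E} {ψ : E → F} (hψ : IsUnitTestField U ψ) (hUW : U ⊆ W) :
    IsUnitTestField W ψ :=
  ⟨hψ.contDiff, hψ.hasCompactSupport, hψ.tsupport_subset.trans hUW, hψ.norm_le_one⟩

lemma of_norm_le {U : Set E} {φ : E → G} {χ : E → F} (hφ : IsUnitTestField U φ)
    (hχ : ContDiff ℝ 1 χ) (hχφ : ∀ x, ‖χ x‖ ≤ ‖φ x‖) : IsUnitTestField (tsupport φ) χ := by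
  have hsupp : Function.support χ ⊆ Function.support φ := fun x hx hφx =>
    hx (norm_le_zero_iff.1 ((hχφ x).trans_eq (by rw [hφx, norm_zero])))
  exact ⟨hχ, hφ.hasCompactSupport.mono hsupp, closure_mono hsupp,
    fun x => (hχφ x).trans (hφ.norm_le_one x)⟩

lemma comp_add_right {U W : Set E} {ψ : E → F} (hψ : IsUnitTestField U ψ) {v : E}
    (hv : ∀ x ∈ U, x - v ∈ W) : IsUnitTestField W (fun x => ψ (x + v)) where
  contDiff := hψ.contDiff.comp (contDiff_id.add contDiff_const)
  hasCompactSupport := hψ.hasCompactSupport.comp_homeomorph (Homeomorph.addRight v)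
  tsupport_subset x hx := by
    have hxv : x + v ∈ tsupport ψ := by
      rwa [show (fun x => ψ (x + v)) = ψ ∘ Homeomorph.addRight v from rfl,
        tsupport_comp_eq_preimage] at hx
    simpa using hv _ (hψ.tsupport_subset hxv)
  norm_le_one x := hψ.norm_le_one (x + v)

end IsUnitTestField

lemma exists_pos_forall_sub_smul_mem {K W : Set E} (hK : IsCompact K) (hW : IsOpen W)
    (hKW : K ⊆ W) (d : E) : ∃ ε > 0, ∀ r : ℝ, |r| < ε → ∀ x ∈ K, x - r • d ∈ W := by
  have hnear : ∀ᶠ r in 𝓝 (0 : ℝ), ∀ x ∈ K, x - r • d ∈ W := by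
    refine hK.eventually_forall_of_forall_eventually fun x hx => ?_
    have hcont : Continuous fun p : ℝ × E => p.2 - p.1 • d := by fun_prop
    exact hcont.continuousAt.eventually_mem (hW.mem_nhds (by simpa using hKW hx))
  simpa only [Real.dist_0_eq_abs] using Metric.eventually_nhds_iff.1 hnear

end TestFields

lemma le_of_hasDerivAt_of_forall_sub_le_mul {f : ℝ → ℝ} {f' K ε : ℝ}
    (hf : HasDerivAt f f' 0) (hε : 0 < ε)
    (hK : ∀ t, 0 < t → t < ε → f t - f 0 ≤ K * t) : f' ≤ K := by
  refine le_of_tendsto hf.tendsto_slope_zero_right ?_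
  filter_upwards [Ioo_mem_nhdsGT hε] with t ht
  rw [zero_add, smul_eq_mul, inv_mul_le_iff₀ ht.1, mul_comm t K]
  exact hK t ht.1 ht.2

section Variation

variable {E F : Type*} [NormedAddCommGroup E] [MeasurableSpace E] {μ : Measure E}
  [NormedAddCommGroup F] [InnerProductSpace ℝ F]

section DirectionalVariation

variable [NormedSpace ℝ E]

/-- The total variation on `U` along `d` of a vector field `s`, defined by duality; for real-valued
`s` it is `dirTV`. -/
def directionalVariation (μ : Measure E) (U : Set E) (d : E) (s : E → F) : ℝ≥0∞ :=
  ⨆ (ψ : E → F) (_ : IsUnitTestField U ψ), ENNReal.ofReal (∫ x in U, ⟪s x, fderiv ℝ ψ x d⟫ ∂μ)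

lemma setIntegral_inner_fderiv_eq_integral_indicator {U W : Set E} (hWU : W ⊆ U) {s ψ : E → F}
    (hψ : tsupport ψ ⊆ W) (d : E) :
    ∫ x in U, ⟪s x, fderiv ℝ ψ x d⟫ ∂μ = ∫ x, ⟪W.indicator s x, fderiv ℝ ψ x d⟫ ∂μ := by
  have hzero (x : E) (hx : x ∉ W) : ⟪s x, fderiv ℝ ψ x d⟫ = 0 := by
    rw [fderiv_of_notMem_tsupport (𝕜 := ℝ) fun h => hx (hψ h), _root_.zero_apply,
      inner_zero_right]
  rw [setIntegral_eq_integral_of_forall_compl_eq_zero fun x hx => hzero x fun h => hx (hWU h)]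
  refine integral_congr_ae (.of_forall fun x => ?_)
  by_cases hx : x ∈ W
  · simp only [Set.indicator_of_mem hx]
  · simp only [Set.indicator_of_notMem hx, inner_zero_left, hzero x hx]

end DirectionalVariation

variable [BorelSpace E]

section Translation

variable [SecondCountableTopology E]

lemma integrable_inner_of_hasCompactSupport {f ψ : E → F} (hf : Integrable f μ)
    (hψ : Continuous ψ) (hψc : HasCompactSupport ψ) : Integrable (fun x => ⟪f x, ψ x⟫) μ := by
  obtain ⟨C, hC⟩ := hψ.bounded_above_of_compact_support hψc
  refine (hf.norm.mul_const C).mono' (hf.aestronglyMeasurable.inner hψ.aestronglyMeasurable)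
    (.of_forall fun x => ?_)
  exact (norm_inner_le_norm _ _).trans (by gcongr; exact hC x)

lemma integral_inner_comp_sub_sub_self [μ.IsAddRightInvariant] {f ψ : E → F}
    (hf : Integrable f μ) (hψ : Continuous ψ) (hψc : HasCompactSupport ψ) (v : E) :
    ∫ x, ⟪f (x - v) - f x, ψ x⟫ ∂μ = ∫ x, ⟪f x, ψ (x + v)⟫ ∂μ - ∫ x, ⟪f x, ψ x⟫ ∂μ := by
  have htranslate : ∫ x, ⟪f (x - v), ψ x⟫ ∂μ = ∫ x, ⟪f x, ψ (x + v)⟫ ∂μ := by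
    rw [← integral_add_right_eq_self (fun x => ⟪f (x - v), ψ x⟫) v]
    simp only [add_sub_cancel_right]
  simp only [inner_sub_left]
  rw [integral_sub (integrable_inner_of_hasCompactSupport (hf.comp_sub_right v) hψ hψc)
    (integrable_inner_of_hasCompactSupport hf hψ hψc), htranslate]

variable [NormedSpace ℝ E]

lemma hasDerivAt_integral_inner_comp_add_smul {f ψ : E → F} (hf : Integrable f μ)
    (hψ : ContDiff ℝ 1 ψ) (hψc : HasCompactSupport ψ) (d : E) (t : ℝ) :
    HasDerivAt (fun t : ℝ => ∫ x, ⟪f x, ψ (x + t • d)⟫ ∂μ)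
      (∫ x, ⟪f x, fderiv ℝ ψ (x + t • d) d⟫ ∂μ) t := by
  have hdψ : Continuous fun x => fderiv ℝ ψ x d :=
    (hψ.continuous_fderiv one_ne_zero).clm_apply continuous_const
  obtain ⟨C, hC⟩ := hdψ.bounded_above_of_compact_support (hψc.fderiv_apply ℝ d)
  have hline (x : E) (r : ℝ) :
      HasDerivAt (fun r : ℝ => ψ (x + r • d)) (fderiv ℝ ψ (x + r • d) d) r := by
    have hadd : HasDerivAt (fun r : ℝ => x + r • d) d r := by
      simpa only [one_smul] using ((hasDerivAt_id' r).smul_const d).const_add x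
    exact (hψ.differentiable one_ne_zero _).hasFDerivAt.comp_hasDerivAt r hadd
  refine (hasDerivAt_integral_of_dominated_loc_of_deriv_le (𝕜 := ℝ)
    (F := fun r x => ⟪f x, ψ (x + r • d)⟫)
    (F' := fun r x => ⟪f x, fderiv ℝ ψ (x + r • d) d⟫)
    (bound := fun x => ‖f x‖ * C) univ_mem (.of_forall fun r => ?_) ?_ ?_
    (.of_forall fun x r _ => ?_) (hf.norm.mul_const C) (.of_forall fun x r _ => ?_)).2
  · exact hf.aestronglyMeasurable.inner
      (hψ.continuous.comp (continuous_add_const _)).aestronglyMeasurable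
  · exact integrable_inner_of_hasCompactSupport hf (hψ.continuous.comp (continuous_add_const _))
      (hψc.comp_homeomorph (Homeomorph.addRight (t • d)))
  · exact hf.aestronglyMeasurable.inner
      (hdψ.comp (continuous_add_const _)).aestronglyMeasurable
  · exact (norm_inner_le_norm _ _).trans (by gcongr; exact hC _)
  · simpa using (hasDerivAt_const r (f x)).inner ℝ (hline x r)

lemma integral_inner_comp_sub_smul_sub_self_le [μ.IsAddRightInvariant] {f χ : E → F}
    (hf : Integrable f μ) (hχ : ContDiff ℝ 1 χ) (hχc : HasCompactSupport χ) {d : E} {K t : ℝ}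
    (ht : 0 ≤ t)
    (hK : ∀ r, 0 < r → r < t → ∫ x, ⟪f x, fderiv ℝ χ (x + r • d) d⟫ ∂μ ≤ K) :
    ∫ x, ⟪f (x - t • d) - f x, χ x⟫ ∂μ ≤ K * t := by
  have hderiv := hasDerivAt_integral_inner_comp_add_smul hf hχ hχc d
  have hdiff : Differentiable ℝ fun t : ℝ => ∫ x, ⟪f x, χ (x + t • d)⟫ ∂μ :=
    fun r => (hderiv r).differentiableAt
  have hmean := (convex_Icc 0 t).image_sub_le_mul_sub_of_deriv_le hdiff.continuous.continuousOn
    hdiff.differentiableOn (C := K)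
    (fun r hr => by
      rw [interior_Icc] at hr
      exact (hderiv r).deriv.trans_le (hK r hr.1 hr.2))
    0 (Set.left_mem_Icc.2 ht) t (Set.right_mem_Icc.2 ht) ht
  rw [integral_inner_comp_sub_sub_self hf hχ.continuous hχc]
  simpa only [zero_smul, add_zero, sub_zero] using hmean

end Translation

section NormVariation

variable [NormedSpace ℝ E] [FiniteDimensional ℝ E] [μ.IsAddHaarMeasure] [CompleteSpace F]

lemma exists_contDiff_norm_le_ae_tendsto {σ : E → F} (hσ : AEStronglyMeasurable σ μ) {C : ℝ}
    (hC : ∀ x, ‖σ x‖ ≤ C) :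
    ∃ u : ℕ → E → F, (∀ n, ContDiff ℝ 1 (u n)) ∧ (∀ n x, ‖u n x‖ ≤ C) ∧
      ∀ᵐ x ∂μ, Tendsto (fun n => u n x) atTop (𝓝 (σ x)) := by
  have hσloc : LocallyIntegrable σ μ :=
    (locallyIntegrable_const C).mono hσ (.of_forall fun x => (hC x).trans (le_abs_self C))
  let η (n : ℕ) : ContDiffBump (0 : E) :=
    ⟨1 / (n + 1) / 2, 1 / (n + 1), by positivity, half_lt_self (by positivity)⟩
  refine ⟨fun n => (η n).normed μ ⋆[ContinuousLinearMap.lsmul ℝ ℝ, μ] σ, fun n => ?_,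
    fun n x => ?_, ?_⟩
  · exact (η n).hasCompactSupport_normed.contDiff_convolution_left (n := 1) _
      (η n).contDiff_normed hσloc
  · simpa only [dist_zero_right] using
      dist_convolution_le (z₀ := 0) ((norm_nonneg _).trans (hC x)) (η n).support_normed_eq.subset
        (η n).nonneg_normed (η n).integral_normed hσ
        (fun y _ => (dist_zero_right (σ y)).trans_le (hC y))
  · refine ContDiffBump.ae_convolution_tendsto_right_of_locallyIntegrable (K := 2)
      tendsto_one_div_add_atTop_nhds_zero_nat (.of_forall fun n => ?_) hσloc
    exact (mul_div_cancel₀ _ two_ne_zero).ge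

lemma integral_norm_mul_abs_le_of_forall_inner_le {g : E → F} {φ : E → ℝ} {C : ℝ}
    (hg : AEStronglyMeasurable g μ) (hφ : ContDiff ℝ 1 φ)
    (hgφ : Integrable (fun x => ‖g x‖ * |φ x|) μ)
    (hC : ∀ χ : E → F, ContDiff ℝ 1 χ → (∀ x, ‖χ x‖ ≤ |φ x|) → ∫ x, ⟪g x, χ x⟫ ∂μ ≤ C) :
    ∫ x, ‖g x‖ * |φ x| ∂μ ≤ C := by
  let w : E → F := fun x => φ x • g x
  let σ : E → F := fun x => ‖w x‖⁻¹ • w x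
  have hw : AEStronglyMeasurable w μ := hφ.continuous.aestronglyMeasurable.smul hg
  have hσ : AEStronglyMeasurable σ μ := hw.norm.inv₀.smul hw
  have hσ_le (x : E) : ‖σ x‖ ≤ 1 :=
    mem_closedBall_zero_iff.1 (inv_norm_smul_mem_unitClosedBall (w x))
  have hσ_inner (x : E) : ⟪g x, φ x • σ x⟫ = ‖g x‖ * |φ x| :=
    calc
      ⟪g x, φ x • σ x⟫ = ⟪w x, ‖w x‖⁻¹ • w x⟫ := by
        rw [real_inner_smul_right, real_inner_smul_left]
      _ = ‖w x‖ := by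
        rw [real_inner_smul_right, real_inner_self_eq_norm_mul_norm, ← mul_assoc, inv_mul_mul_self]
      _ = ‖g x‖ * |φ x| := by rw [norm_smul, Real.norm_eq_abs, mul_comm]
  obtain ⟨u, hu, hu_le, hu_tendsto⟩ := exists_contDiff_norm_le_ae_tendsto hσ hσ_le
  have hχ_le (n : ℕ) (x : E) : ‖φ x • u n x‖ ≤ |φ x| := by
    rw [norm_smul, Real.norm_eq_abs]
    exact mul_le_of_le_one_right (abs_nonneg _) (hu_le n x)
  have hlim : Tendsto (fun n => ∫ x, ⟪g x, φ x • u n x⟫ ∂μ) atTop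
      (𝓝 (∫ x, ‖g x‖ * |φ x| ∂μ)) := by
    refine tendsto_integral_of_dominated_convergence _
      (fun n => hg.inner (hφ.smul (hu n)).continuous.aestronglyMeasurable) hgφ
      (fun n => .of_forall fun x => ?_) ?_
    · exact (norm_inner_le_norm _ _).trans (by gcongr; exact hχ_le n x)
    · filter_upwards [hu_tendsto] with x hx
      rw [← hσ_inner x]
      exact tendsto_const_nhds.inner (hx.const_smul (φ x))
  exact le_of_tendsto' hlim fun n => hC _ (hφ.smul (hu n)) (hχ_le n)

lemma integral_inner_norm_fderiv_le {W : Set E} (hW : IsOpen W) {d : E} {f : E → F}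
    (hf : Integrable f μ) {K : ℝ}
    (hK : ∀ ψ : E → F, IsUnitTestField W ψ → ∫ x, ⟪f x, fderiv ℝ ψ x d⟫ ∂μ ≤ K)
    {φ : E → ℝ} (hφ : IsUnitTestField W φ) :
    ∫ x, ⟪‖f x‖, fderiv ℝ φ x d⟫ ∂μ ≤ K := by
  obtain ⟨ε, hε, hsub⟩ := exists_pos_forall_sub_smul_mem hφ.hasCompactSupport.isCompact hW
    hφ.tsupport_subset d
  have hφ_deriv := hasDerivAt_integral_inner_comp_add_smul hf.norm hφ.contDiff
    hφ.hasCompactSupport d 0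
  simp only [zero_smul, add_zero] at hφ_deriv
  refine le_of_hasDerivAt_of_forall_sub_le_mul hφ_deriv hε fun t ht htε => ?_
  have hincr : Integrable (fun x => f (x - t • d) - f x) μ := (hf.comp_sub_right _).sub hf
  have hincr_mul : Integrable (fun x => ‖f (x - t • d) - f x‖ * |φ x|) μ :=
    hincr.norm.mul_bdd (c := 1) hφ.contDiff.continuous.abs.aestronglyMeasurable
      (.of_forall fun x => by simpa using hφ.norm_le_one x)
  have hdual : ∫ x, ‖f (x - t • d) - f x‖ * |φ x| ∂μ ≤ K * t := by
    refine integral_norm_mul_abs_le_of_forall_inner_le hincr.aestronglyMeasurable hφ.contDiff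
      hincr_mul fun χ hχ hχφ => ?_
    have hχ_test := hφ.of_norm_le hχ hχφ
    refine integral_inner_comp_sub_smul_sub_self_le hf hχ hχ_test.hasCompactSupport ht.le
      fun r hr hrt => ?_
    have hr_lt : |r| < ε := (abs_of_pos hr).trans_lt (hrt.trans htε)
    simpa only [fderiv_comp_add_right] using hK _ (hχ_test.comp_add_right (hsub r hr_lt))
  calc ∫ x, ⟪‖f x‖, φ (x + t • d)⟫ ∂μ - ∫ x, ⟪‖f x‖, φ (x + (0 : ℝ) • d)⟫ ∂μ
      = ∫ x, ⟪‖f (x - t • d)‖ - ‖f x‖, φ x⟫ ∂μ := by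
        rw [integral_inner_comp_sub_sub_self hf.norm hφ.contDiff.continuous hφ.hasCompactSupport]
        simp only [zero_smul, add_zero]
    _ ≤ ∫ x, ‖f (x - t • d) - f x‖ * |φ x| ∂μ := by
        refine integral_mono (integrable_inner_of_hasCompactSupport
          ((hf.comp_sub_right _).norm.sub hf.norm) hφ.contDiff.continuous hφ.hasCompactSupport)
          hincr_mul fun x => (real_inner_le_norm _ _).trans ?_
        exact mul_le_mul_of_nonneg_right (abs_norm_sub_norm_le _ _) (abs_nonneg _)
    _ ≤ K * t := hdual

theorem directionalVariation_norm_le {U : Set E} (hU : IsOpen U) (d : E) {s : E → F}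
    (hs : LocallyIntegrableOn s U μ) :
    directionalVariation μ U d (fun x => ‖s x‖) ≤ directionalVariation μ U d s := by
  refine iSup₂_le fun φ hφ => ?_
  by_cases htop : directionalVariation μ U d s = ⊤
  · exact htop ▸ le_top
  obtain ⟨W, hW, hφW, hWU, hWc⟩ :=
    exists_open_between_and_isCompact_closure hφ.hasCompactSupport.isCompact hU hφ.tsupport_subset
  have hWU' : W ⊆ U := subset_closure.trans hWU
  have hint : Integrable (W.indicator s) μ :=
    ((hs.integrableOn_compact_subset hWU hWc).mono_set subset_closure).integrable_indicator
      hW.measurableSet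
  rw [ENNReal.ofReal_le_iff_le_toReal htop,
    setIntegral_inner_fderiv_eq_integral_indicator hWU' hφW]
  have hnorm (x : E) : W.indicator (fun x => ‖s x‖) x = ‖W.indicator s x‖ :=
    (norm_indicator_eq_indicator_norm s x).symm
  simp only [hnorm]
  refine integral_inner_norm_fderiv_le hW hint (fun ψ hψ => ?_)
    ⟨hφ.contDiff, hφ.hasCompactSupport, hφW, hφ.norm_le_one⟩
  rw [← setIntegral_inner_fderiv_eq_integral_indicator hWU' hψ.tsupport_subset,
    ← ENNReal.ofReal_le_iff_le_toReal htop]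
  exact le_iSup₂_of_le ψ (hψ.mono hWU') le_rfl

end NormVariation

end Variation

section PlanarVariation

lemma dirTV_eq_directionalVariation (U : Set V3) (d : V3) (f : V3 → ℝ) :
    dirTV U d f = directionalVariation volume U d f := by
  refine le_antisymm (iSup_le fun ⟨φ, hφ, hφc, hφU, hφ_le⟩ => ?_)
    (iSup₂_le fun φ hφ => ?_)
  · refine le_iSup₂_of_le φ ⟨hφ, hφc, hφU, hφ_le⟩ (le_of_eq ?_)
    simp only [Real.inner_apply]
  · refine le_iSup_of_le ⟨φ, hφ.contDiff, hφ.hasCompactSupport, hφ.tsupport_subset,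
      hφ.norm_le_one⟩ (le_of_eq ?_)
    simp only [Real.inner_apply]

lemma directionalVariation_smul_add_smul_le_PTV (U : Set V3) (e₁ e₂ : V3) {a b : ℝ}
    (hab : a ^ 2 + b ^ 2 ≤ 1) (s : V3 → V3) :
    directionalVariation volume U (a • e₁ + b • e₂) s ≤ PTV U e₁ e₂ s := by
  refine iSup₂_le fun ψ hψ => ?_
  have hsmul (t : ℝ) : C1c U (fun x => t • ψ x) :=
    ⟨hψ.contDiff.const_smul t, hψ.hasCompactSupport.smul_left (f := fun _ => t),
      (tsupport_smul_subset_right (fun _ => t) ψ).trans hψ.tsupport_subset⟩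
  have hunit (x : V3) : ‖a • ψ x‖ ^ 2 + ‖b • ψ x‖ ^ 2 ≤ 1 := by
    simp only [norm_smul, mul_pow, Real.norm_eq_abs, sq_abs]
    rw [← add_mul]
    exact mul_le_one₀ hab (sq_nonneg _) (pow_le_one₀ (norm_nonneg _) (hψ.norm_le_one x))
  refine le_iSup_of_le ⟨(fun x => a • ψ x, fun x => b • ψ x), hsmul a, hsmul b, hunit⟩
    (le_of_eq ?_)
  have hdiff := hψ.contDiff.differentiable one_ne_zero
  congr! 4 with x
  simp only [fderiv_fun_const_smul (hdiff x), map_add, map_smul, _root_.smul_apply,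
    inner_add_right]

lemma ONBperp.exists_eq_smul_add_smul {m e₁ e₂ d : V3} (h : ONBperp m e₁ e₂) (hm : ‖m‖ = 1)
    (hdm : ⟪d, m⟫ = 0) : ∃ a b : ℝ, d = a • e₁ + b • e₂ ∧ a ^ 2 + b ^ 2 = ‖d‖ ^ 2 := by
  obtain ⟨he₁, he₂, he₁e₂, he₁m, he₂m⟩ := h
  have hon : Orthonormal ℝ ![e₁, e₂, m] := by
    have he₂e₁ : ⟪e₂, e₁⟫ = 0 := inner_eq_zero_symm.1 he₁e₂
    have hme₁ : ⟪m, e₁⟫ = 0 := inner_eq_zero_symm.1 he₁m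
    have hme₂ : ⟪m, e₂⟫ = 0 := inner_eq_zero_symm.1 he₂m
    rw [orthonormal_iff_ite]
    intro i j
    fin_cases i <;> fin_cases j <;>
      simp [he₁, he₂, hm, he₁e₂, he₁m, he₂m, he₂e₁, hme₁, hme₂]
  let B : OrthonormalBasis (Fin 3) ℝ V3 :=
    OrthonormalBasis.mk hon (hon.linearIndependent.span_eq_top_of_card_eq_finrank (by simp)).ge
  have hsum := B.sum_repr' d
  have hsq := B.sum_sq_norm_inner_right d
  simp only [B, OrthonormalBasis.coe_mk, Fin.sum_univ_three, Matrix.cons_val, real_inner_comm d m,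
    hdm, zero_smul, Real.norm_eq_abs, sq_abs, add_zero, ne_eq, OfNat.ofNat_ne_zero,
    not_false_eq_true, zero_pow] at hsum hsq
  exact ⟨⟪e₁, d⟫, ⟪e₂, d⟫, hsum.symm, hsq⟩

theorem dirTV_norm_le_PTV {m e₁ e₂ d : V3} (hm : ‖m‖ = 1) (he : ONBperp m e₁ e₂)
    (hd : ‖d‖ ≤ 1) (hdm : ⟪d, m⟫ = 0) {V : Set V3} (hV : IsOpen V) {s : V3 → V3}
    (hs : LocallyIntegrableOn s V) : dirTV V d (fun x => ‖s x‖) ≤ PTV V e₁ e₂ s := by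
  obtain ⟨a, b, rfl, hab⟩ := he.exists_eq_smul_add_smul hm hdm
  calc dirTV V (a • e₁ + b • e₂) (fun x => ‖s x‖)
      = directionalVariation volume V (a • e₁ + b • e₂) (fun x => ‖s x‖) :=
        dirTV_eq_directionalVariation _ _ _
    _ ≤ directionalVariation volume V (a • e₁ + b • e₂) s := directionalVariation_norm_le hV _ hs
    _ ≤ PTV V e₁ e₂ s := directionalVariation_smul_add_smul_le_PTV V e₁ e₂
        (hab.trans_le (pow_le_one₀ (norm_nonneg _) hd)) s

end PlanarVariation

theorem planar_curl_controls_transverse_variation_general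
    {m₁ m₂ d₁ d₂ nv : V3} (hm₁ : ‖m₁‖ = 1) (hm₂ : ‖m₂‖ = 1)
    (hd₁ : ‖d₁‖ ≤ 1) (hd₁m₂ : ⟪d₁, m₂⟫ = 0) (hd₂ : ‖d₂‖ ≤ 1) (hd₂m₁ : ⟪d₂, m₁⟫ = 0)
    (hn : ‖nv‖ ≤ 1) (hnm₁ : ⟪nv, m₁⟫ = 0) (hnm₂ : ⟪nv, m₂⟫ = 0)
    {V : Set V3} (hV : IsOpen V) {e₁ e₂ f₁ f₂ : V3}
    (he : ONBperp m₁ e₁ e₂) (hf : ONBperp m₂ f₁ f₂) {s₁ s₂ : V3 → V3}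
    (hs₁ : LocallyIntegrableOn s₁ V) (hs₂ : LocallyIntegrableOn s₂ V) :
    ENNReal.ofReal (1 / 2) *
        (dirTV V d₁ (fun x => ‖s₂ x‖) + dirTV V d₂ (fun x => ‖s₁ x‖) +
          dirTV V nv (fun x => ‖s₁ x‖) + dirTV V nv (fun x => ‖s₂ x‖)) ≤
      PTV V e₁ e₂ s₁ + PTV V f₁ f₂ s₂ := by
  have hhalf : ENNReal.ofReal (1 / 2) * 2 = 1 := by
    rw [← ENNReal.ofReal_ofNat 2, ← ENNReal.ofReal_mul (by norm_num)]
    norm_num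
  calc _ ≤ ENNReal.ofReal (1 / 2) * (PTV V f₁ f₂ s₂ + PTV V e₁ e₂ s₁ +
        PTV V e₁ e₂ s₁ + PTV V f₁ f₂ s₂) := by
        gcongr
        · exact dirTV_norm_le_PTV hm₂ hf hd₁ hd₁m₂ hV hs₂
        · exact dirTV_norm_le_PTV hm₁ he hd₂ hd₂m₁ hV hs₁
        · exact dirTV_norm_le_PTV hm₁ he hn hnm₁ hV hs₁
        · exact dirTV_norm_le_PTV hm₂ hf hn hnm₂ hV hs₂
    _ = ENNReal.ofReal (1 / 2) * 2 * (PTV V e₁ e₂ s₁ + PTV V f₁ f₂ s₂) := by ring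
    _ = PTV V e₁ e₂ s₁ + PTV V f₁ f₂ s₂ := by rw [hhalf, one_mul]

/-- For linearly independent unit slip normals `m₁, m₂`, with
`d₁ ⊥ m₂`, `d₂ ⊥ m₁` the corresponding in-plane unit directions (positively oriented
with respect to `m₁`, resp. `m₂`), and `n` a unit normal to `span{m₁,m₂}`, there is a
constant `c > 0`, depending only on `m₁, m₂`, such that for any open `V` and any
`s₁, s₂ ∈ L¹(V;ℝ³)` with `s₁ ⊥ m₁`, `s₂ ⊥ m₂` a.e.,
`∫_V |∇_{m₁^⊥} s₁| + ∫_V |∇_{m₂^⊥} s₂| ≥ c (TV_{d₁}(|s₂|) + TV_{d₂}(|s₁|) + TV_n(|s₁|) + TV_n(|s₂|))`. -/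
theorem planar_curl_controls_transverse_variation
    (m₁ m₂ : V3) (hm₁ : ‖m₁‖ = 1) (hm₂ : ‖m₂‖ = 1)
    (hli : ∀ a b : ℝ, a • m₁ + b • m₂ = 0 → a = 0 ∧ b = 0)
    (d₁ d₂ nv : V3)
    (hd₁span : d₁ ∈ Submodule.span ℝ ({m₁, m₂} : Set V3))
    (hd₁ : ‖d₁‖ = 1) (hd₁m₂ : ⟪d₁, m₂⟫ = 0) (hd₁m₁ : 0 < ⟪d₁, m₁⟫)
    (hd₂span : d₂ ∈ Submodule.span ℝ ({m₁, m₂} : Set V3))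
    (hd₂ : ‖d₂‖ = 1) (hd₂m₁ : ⟪d₂, m₁⟫ = 0) (hd₂m₂ : 0 < ⟪d₂, m₂⟫)
    (hn : ‖nv‖ = 1) (hnm₁ : ⟪nv, m₁⟫ = 0) (hnm₂ : ⟪nv, m₂⟫ = 0) :
    ∃ c : ℝ, 0 < c ∧
      ∀ V : Set V3, IsOpen V →
      ∀ e₁ e₂ f₁ f₂ : V3, ONBperp m₁ e₁ e₂ → ONBperp m₂ f₁ f₂ →
      ∀ s₁ s₂ : V3 → V3, IntegrableOn s₁ V → IntegrableOn s₂ V →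
        (∀ᵐ x ∂volume.restrict V, ⟪s₁ x, m₁⟫ = 0) →
        (∀ᵐ x ∂volume.restrict V, ⟪s₂ x, m₂⟫ = 0) →
        ENNReal.ofReal c *
            (dirTV V d₁ (fun x => ‖s₂ x‖) + dirTV V d₂ (fun x => ‖s₁ x‖) +
              dirTV V nv (fun x => ‖s₁ x‖) + dirTV V nv (fun x => ‖s₂ x‖)) ≤
          PTV V e₁ e₂ s₁ + PTV V f₁ f₂ s₂ := by
  exact ⟨1 / 2, by norm_num, fun V hV e₁ e₂ f₁ f₂ he hf s₁ s₂ hs₁ hs₂ _ _ =>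
    planar_curl_controls_transverse_variation_general hm₁ hm₂ hd₁.le hd₁m₂ hd₂.le hd₂m₁ hn.le
      hnm₁ hnm₂ hV he hf hs₁.locallyIntegrableOn hs₂.locallyIntegrableOn⟩

end
end

section
/- Let l_1, l_2 > 0, Q = (0,l_1)×(0,l_2) ⊂ ℝ², and let f, g : Q → ℝⁿ be continuously differentiable with f, g, ∂f/∂x_2 and ∂g/∂x_1 integrable over Q. Suppose |f(x)||g(x)| = 0 for a.e. x ∈ Q. Then at least one of the following two inequalities holds: ∫_Q |f(x)| dx ≤ l_2 ∫_Q |∂f/∂x_2 (x)| dx, or ∫_Q |g(x)| dx ≤ l_1 ∫_Q |∂g/∂x_1 (x)| dx. -/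
open MeasureTheory Set

/-!
Either every vertical segment of the rectangle contains a zero of `f`, or some vertical segment
contains none. In the second case `g` vanishes on that whole segment, since `f` and `g` have no
common point of nonvanishing, and therefore every horizontal segment contains a zero of `g`. On
a segment containing a zero of a function, the fundamental theorem of calculus bounds the function
pointwise by the integral of its derivative; integrating this bound over all parallel segments
gives the estimate.
-/

section Interval

variable {E : Type*} [NormedAddCommGroup E] [NormedSpace ℝ E] [CompleteSpace E]
  {u : ℝ → E}

theorem enorm_sub_le_lintegral_enorm_deriv {a b : ℝ}
    (hu : ∀ t ∈ uIcc a b, DifferentiableAt ℝ u t) :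
    ‖u b - u a‖ₑ ≤ ∫⁻ t in uIoc a b, ‖deriv u t‖ₑ := by
  by_cases hfin : ∫⁻ t in uIoc a b, ‖deriv u t‖ₑ = ⊤
  · exact hfin ▸ le_top
  have hint : IntervalIntegrable (deriv u) volume a b :=
    intervalIntegrable_iff.mpr ⟨aestronglyMeasurable_deriv u _, lt_top_iff_ne_top.mpr hfin⟩
  calc ‖u b - u a‖ₑ = ‖∫ t in a..b, deriv u t‖ₑ := by
        rw [intervalIntegral.integral_deriv_eq_sub hu hint]
    _ = ‖∫ t in uIoc a b, deriv u t‖ₑ := by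
        rw [← ofReal_norm, intervalIntegral.norm_integral_eq_norm_integral_uIoc, ofReal_norm]
    _ ≤ ∫⁻ t in uIoc a b, ‖deriv u t‖ₑ := enorm_integral_le_lintegral_enorm _

theorem setLIntegral_enorm_le_volume_mul_deriv_of_exists_eq_zero {T : Set ℝ}
    (hT : T.OrdConnected) (hu : ∀ t ∈ T, DifferentiableAt ℝ u t) (hzero : ∃ c ∈ T, u c = 0) :
    ∫⁻ t in T, ‖u t‖ₑ ≤ volume T * ∫⁻ t in T, ‖deriv u t‖ₑ := by
  obtain ⟨c, hc, huc⟩ := hzero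
  have pointwise_bound : ∀ t ∈ T, ‖u t‖ₑ ≤ ∫⁻ s in T, ‖deriv u s‖ₑ := fun t ht ↦ by
    have hsub : uIcc c t ⊆ T := hT.uIcc_subset hc ht
    calc ‖u t‖ₑ = ‖u t - u c‖ₑ := by rw [huc, sub_zero]
      _ ≤ ∫⁻ s in uIoc c t, ‖deriv u s‖ₑ :=
          enorm_sub_le_lintegral_enorm_deriv fun s hs ↦ hu s (hsub hs)
      _ ≤ ∫⁻ s in T, ‖deriv u s‖ₑ := lintegral_mono_set (uIoc_subset_uIcc.trans hsub)
  calc ∫⁻ t in T, ‖u t‖ₑ ≤ ∫⁻ _ in T, ∫⁻ s in T, ‖deriv u s‖ₑ :=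
        setLIntegral_mono' hT.measurableSet pointwise_bound
    _ = volume T * ∫⁻ t in T, ‖deriv u t‖ₑ := by rw [setLIntegral_const, mul_comm]

end Interval

theorem setLIntegral_prod_comp_swap {α β : Type*} [MeasurableSpace α] [MeasurableSpace β]
    {μ : Measure α} {ν : Measure β} [SFinite μ] [SFinite ν] (s : Set α) (t : Set β)
    (φ : α × β → ENNReal) :
    ∫⁻ x in t ×ˢ s, φ x.swap ∂ν.prod μ = ∫⁻ x in s ×ˢ t, φ x ∂μ.prod ν := by
  rw [← Measure.prod_restrict, ← Measure.prod_restrict, lintegral_prod_swap]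

section Product

variable {E : Type*} [NormedAddCommGroup E] [NormedSpace ℝ E]
  {X : Type*} [NormedAddCommGroup X] [NormedSpace ℝ X]

theorem deriv_comp_prodMk_right {f : X × ℝ → E} {a : X} {t : ℝ}
    (hf : DifferentiableAt ℝ f (a, t)) :
    deriv (fun s ↦ f (a, s)) t = fderiv ℝ f (a, t) (0, 1) :=
  (hf.hasFDerivAt.comp_hasDerivAt t ((hasDerivAt_const t a).prodMk (hasDerivAt_id t))).deriv

theorem fderiv_comp_swap_apply {Y : Type*} [NormedAddCommGroup Y] [NormedSpace ℝ Y]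
    (f : Y × X → E) (x v : X × Y) :
    fderiv ℝ (fun z : X × Y ↦ f z.swap) x v = fderiv ℝ f x.swap v.swap := by
  change fderiv ℝ (f ∘ ContinuousLinearEquiv.prodComm ℝ X Y) x v = _
  rw [ContinuousLinearEquiv.comp_right_fderiv]
  rfl

variable [CompleteSpace E] [MeasurableSpace X] [BorelSpace X] [SecondCountableTopology X]
  {μ : Measure X} [SFinite μ] {S : Set X} {T : Set ℝ}

theorem setLIntegral_enorm_le_volume_mul_fderiv_snd_of_exists_eq_zero {f : X × ℝ → E}
    (hS : MeasurableSet S) (hT : T.OrdConnected)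
    (hf : ∀ x ∈ S ×ˢ T, DifferentiableAt ℝ f x)
    (hzero : ∀ a ∈ S, ∃ b ∈ T, f (a, b) = 0) :
    ∫⁻ x in S ×ˢ T, ‖f x‖ₑ ∂μ.prod volume ≤
      volume T * ∫⁻ x in S ×ˢ T, ‖fderiv ℝ f x (0, 1)‖ₑ ∂μ.prod volume := by
  have hf_meas : AEMeasurable (fun x ↦ ‖f x‖ₑ) ((μ.prod volume).restrict (S ×ˢ T)) :=
    (ContinuousOn.aestronglyMeasurable (fun x hx ↦ (hf x hx).continuousAt.continuousWithinAt)
      (hS.prod hT.measurableSet)).enorm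
  have hf'_meas : Measurable fun x ↦ ‖fderiv ℝ f x (0, 1)‖ₑ := by
    borelize E
    exact (measurable_fderiv_apply_const ℝ f (0, 1)).enorm
  have slice_bound : ∀ a ∈ S, ∫⁻ t in T, ‖f (a, t)‖ₑ ≤
      volume T * ∫⁻ t in T, ‖fderiv ℝ f (a, t) (0, 1)‖ₑ := fun a ha ↦ by
    have hslice : ∀ t ∈ T, DifferentiableAt ℝ (fun s ↦ f (a, s)) t := fun t ht ↦
      (hf (a, t) ⟨ha, ht⟩).comp t (by fun_prop)
    refine (setLIntegral_enorm_le_volume_mul_deriv_of_exists_eq_zero hT hslice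
      (hzero a ha)).trans_eq ?_
    congr 1
    refine setLIntegral_congr_fun hT.measurableSet fun t ht ↦ ?_
    simp only [deriv_comp_prodMk_right (hf (a, t) ⟨ha, ht⟩)]
  calc ∫⁻ x in S ×ˢ T, ‖f x‖ₑ ∂μ.prod volume
      = ∫⁻ a in S, (∫⁻ t in T, ‖f (a, t)‖ₑ) ∂μ := setLIntegral_prod _ hf_meas
    _ ≤ ∫⁻ a in S, (volume T * ∫⁻ t in T, ‖fderiv ℝ f (a, t) (0, 1)‖ₑ) ∂μ :=
        setLIntegral_mono' hS slice_bound
    _ = volume T * ∫⁻ a in S, (∫⁻ t in T, ‖fderiv ℝ f (a, t) (0, 1)‖ₑ) ∂μ :=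
        lintegral_const_mul _ hf'_meas.lintegral_prod_right'
    _ = volume T * ∫⁻ x in S ×ˢ T, ‖fderiv ℝ f x (0, 1)‖ₑ ∂μ.prod volume := by
        rw [setLIntegral_prod _ hf'_meas.aemeasurable]

theorem setLIntegral_enorm_le_volume_mul_fderiv_fst_of_exists_eq_zero {f : ℝ × X → E}
    (hS : MeasurableSet S) (hT : T.OrdConnected)
    (hf : ∀ x ∈ T ×ˢ S, DifferentiableAt ℝ f x)
    (hzero : ∀ a ∈ S, ∃ b ∈ T, f (b, a) = 0) :
    ∫⁻ x in T ×ˢ S, ‖f x‖ₑ ∂volume.prod μ ≤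
      volume T * ∫⁻ x in T ×ˢ S, ‖fderiv ℝ f x (1, 0)‖ₑ ∂volume.prod μ := by
  have hf_swap : ∀ x ∈ S ×ˢ T, DifferentiableAt ℝ (fun z : X × ℝ ↦ f z.swap) x := fun x hx ↦
    (hf x.swap ⟨hx.2, hx.1⟩).comp x (differentiableAt_snd.prodMk differentiableAt_fst)
  rw [← setLIntegral_prod_comp_swap T S fun x ↦ ‖f x‖ₑ,
    ← setLIntegral_prod_comp_swap T S fun x ↦ ‖fderiv ℝ f x (1, 0)‖ₑ]
  simpa only [fderiv_comp_swap_apply, Prod.swap_prod_mk] using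
    setLIntegral_enorm_le_volume_mul_fderiv_snd_of_exists_eq_zero (μ := μ) hS hT hf_swap hzero

end Product

theorem forall_exists_or_forall_exists_of_forall_prod {α β : Type*} {S : Set α} {T : Set β}
    {p q : α × β → Prop} (h : ∀ x ∈ S ×ˢ T, p x ∨ q x) :
    (∀ a ∈ S, ∃ b ∈ T, p (a, b)) ∨ (∀ b ∈ T, ∃ a ∈ S, q (a, b)) := by
  refine or_iff_not_imp_left.mpr fun hp ↦ ?_
  push Not at hp
  obtain ⟨a, ha, hpa⟩ := hp
  exact fun b hb ↦ ⟨a, ha, (h (a, b) ⟨ha, hb⟩).resolve_left (hpa b hb)⟩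

theorem forall_eq_zero_or_eq_zero_of_ae_restrict {X E F : Type*} [TopologicalSpace X]
    [MeasurableSpace X] {μ : Measure X} [μ.IsOpenPosMeasure]
    [NormedAddCommGroup E] [NormedAddCommGroup F] {U : Set X} (hU : IsOpen U)
    {f : X → E} {g : X → F} (hf : ContinuousOn f U) (hg : ContinuousOn g U)
    (hfg : ∀ᵐ x ∂μ.restrict U, f x = 0 ∨ g x = 0) :
    ∀ x ∈ U, f x = 0 ∨ g x = 0 := by
  have hprod_ae : (fun x ↦ ‖f x‖ * ‖g x‖) =ᵐ[μ.restrict U] fun _ ↦ 0 :=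
    hfg.mono fun x hx ↦ by simpa using hx
  have hprod : EqOn (fun x ↦ ‖f x‖ * ‖g x‖) (fun _ ↦ 0) U :=
    Measure.eqOn_open_of_ae_eq hprod_ae hU (hf.norm.mul hg.norm) continuousOn_const
  exact fun x hx ↦ by simpa using hprod hx

theorem integral_norm_le_of_lintegral_enorm_le {α E F : Type*} [MeasurableSpace α]
    {μ : Measure α} [NormedAddCommGroup E] [NormedAddCommGroup F] {f : α → E} {g : α → F}
    {c : ℝ} (hc : 0 ≤ c) (hf : AEStronglyMeasurable f μ) (hg : Integrable g μ)
    (h : ∫⁻ x, ‖f x‖ₑ ∂μ ≤ ENNReal.ofReal c * ∫⁻ x, ‖g x‖ₑ ∂μ) :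
    ∫ x, ‖f x‖ ∂μ ≤ c * ∫ x, ‖g x‖ ∂μ := by
  have hreal := ENNReal.toReal_mono (ENNReal.mul_ne_top ENNReal.ofReal_ne_top hg.2.ne) h
  rwa [ENNReal.toReal_mul, ENNReal.toReal_ofReal hc, ← integral_norm_eq_lintegral_enorm hf,
    ← integral_norm_eq_lintegral_enorm hg.1] at hreal

theorem dichotomy_poincare_estimate_general {E F : Type*}
    [NormedAddCommGroup E] [NormedSpace ℝ E] [CompleteSpace E]
    [NormedAddCommGroup F] [NormedSpace ℝ F] [CompleteSpace F]
    {S T : Set ℝ} (hS : IsOpen S) (hS' : S.OrdConnected) (hT : IsOpen T) (hT' : T.OrdConnected)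
    {f : ℝ × ℝ → E} {g : ℝ × ℝ → F}
    (hf : DifferentiableOn ℝ f (S ×ˢ T)) (hg : DifferentiableOn ℝ g (S ×ˢ T))
    (hfg : ∀ᵐ x ∂volume.restrict (S ×ˢ T), f x = 0 ∨ g x = 0) :
    (∫⁻ x in S ×ˢ T, ‖f x‖ₑ ≤ volume T * ∫⁻ x in S ×ˢ T, ‖fderiv ℝ f x (0, 1)‖ₑ) ∨
    (∫⁻ x in S ×ˢ T, ‖g x‖ₑ ≤ volume S * ∫⁻ x in S ×ˢ T, ‖fderiv ℝ g x (1, 0)‖ₑ) := by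
  have hQ : IsOpen (S ×ˢ T) := hS.prod hT
  have hvanish : ∀ x ∈ S ×ˢ T, f x = 0 ∨ g x = 0 :=
    forall_eq_zero_or_eq_zero_of_ae_restrict hQ hf.continuousOn hg.continuousOn hfg
  exact (forall_exists_or_forall_exists_of_forall_prod hvanish).imp
    (setLIntegral_enorm_le_volume_mul_fderiv_snd_of_exists_eq_zero hS.measurableSet hT'
      fun x hx ↦ hf.differentiableAt (hQ.mem_nhds hx))
    (setLIntegral_enorm_le_volume_mul_fderiv_fst_of_exists_eq_zero hT.measurableSet hS'
      fun x hx ↦ hg.differentiableAt (hQ.mem_nhds hx))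

/-- If `f, g` are `C¹` on `Q = (0,l₁) × (0,l₂)`, with `f`, `g`, `∂f/∂x₂`,
`∂g/∂x₁` integrable on `Q`, and `|f(x)||g(x)| = 0` a.e. on `Q`, then
`∫_Q |f| ≤ l₂ ∫_Q |∂f/∂x₂|` or `∫_Q |g| ≤ l₁ ∫_Q |∂g/∂x₁|`. -/
theorem dichotomy_poincare_estimate
    (n : ℕ) (l₁ l₂ : ℝ) (hl₁ : 0 < l₁) (hl₂ : 0 < l₂)
    (f g : ℝ × ℝ → EuclideanSpace ℝ (Fin n))
    (hf : ContDiffOn ℝ 1 f (Ioo 0 l₁ ×ˢ Ioo 0 l₂))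
    (hg : ContDiffOn ℝ 1 g (Ioo 0 l₁ ×ˢ Ioo 0 l₂))
    (hfi : IntegrableOn f (Ioo 0 l₁ ×ˢ Ioo 0 l₂))
    (hgi : IntegrableOn g (Ioo 0 l₁ ×ˢ Ioo 0 l₂))
    (hfd : IntegrableOn (fun x => fderiv ℝ f x (0, 1)) (Ioo 0 l₁ ×ˢ Ioo 0 l₂))
    (hgd : IntegrableOn (fun x => fderiv ℝ g x (1, 0)) (Ioo 0 l₁ ×ˢ Ioo 0 l₂))
    (hfg : ∀ᵐ x ∂(volume.restrict (Ioo 0 l₁ ×ˢ Ioo 0 l₂)), ‖f x‖ * ‖g x‖ = 0) :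
    (∫ x in Ioo 0 l₁ ×ˢ Ioo 0 l₂, ‖f x‖ ≤
        l₂ * ∫ x in Ioo 0 l₁ ×ˢ Ioo 0 l₂, ‖fderiv ℝ f x (0, 1)‖) ∨
    (∫ x in Ioo 0 l₁ ×ˢ Ioo 0 l₂, ‖g x‖ ≤
        l₁ * ∫ x in Ioo 0 l₁ ×ˢ Ioo 0 l₂, ‖fderiv ℝ g x (1, 0)‖) := by
  have h := dichotomy_poincare_estimate_general isOpen_Ioo ordConnected_Ioo isOpen_Ioo
    ordConnected_Ioo (hf.differentiableOn one_ne_zero) (hg.differentiableOn one_ne_zero)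
    (by simpa using hfg)
  rw [Real.volume_Ioo, Real.volume_Ioo, sub_zero, sub_zero] at h
  exact h.imp (integral_norm_le_of_lintegral_enorm_le hl₂.le hfi.1 hfd)
    (integral_norm_le_of_lintegral_enorm_le hl₁.le hgi.1 hgd)
end
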